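/- The set GL_p(H) of invertible bounded operators g = (a b; c d) on a polarized Hilbert space H = H₊ ⊕ H₋ whose off-diagonal blocks b, c belong to the Schatten class L^{2p} is a group under composition: it is closed under products and inverses. -/

import Mathlib

open scoped InnerProductSpace

variable {H : Type*} [NormedAddCommGroup H] [InnerProductSpace ℂ H] [CompleteSpace H]

/-- `T` is a Hilbert–Schmidt operator: `∑ ‖T e_i‖² < ∞` for the Hilbert basis `e`. -/
def IsHilbertSchmidt {ι : Type*} (e : HilbertBasis ι ℂ H) (T : H →L[ℂ] H) : Prop :=
  Summable fun i => ‖T (e i)‖ ^ 2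

/-- The projection `P₊ = (1 + ε)/2` onto `H₊` associated to a sign operator `ε`. -/
noncomputable def Pplus (ε : H →L[ℂ] H) : H →L[ℂ] H := (2⁻¹ : ℂ) • (1 + ε)

/-- The projection `P₋ = (1 - ε)/2` onto `H₋` associated to a sign operator `ε`. -/
noncomputable def Pminus (ε : H →L[ℂ] H) : H →L[ℂ] H := (2⁻¹ : ℂ) • (1 - ε)

/-- The operator `(A*A)^(p/2)`, defined via the continuous functional calculus. -/
noncomputable def absPow (p : ℝ) (A : H →L[ℂ] H) : H →L[ℂ] H :=
  cfc (fun x : ℝ => x ^ (p / 2)) (ContinuousLinearMap.adjoint A ∘L A)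

/-- `A` belongs to the Schatten ideal `L^p`. -/
def MemSchatten {ι : Type*} (e : HilbertBasis ι ℂ H) (p : ℝ) (A : H →L[ℂ] H) : Prop :=
  Summable fun i => Complex.re ⟪(absPow p A) (e i), e i⟫_ℂ

/-- `g` lies in `GL_p(H)`: it is invertible and its off-diagonal blocks with respect to the
polarization defined by the sign operator `ε` belong to the Schatten class `L^{2p}`. -/
def MemGLp {ι : Type*} (e : HilbertBasis ι ℂ H) (ε : H →L[ℂ] H) (p : ℝ)
    (g : (H →L[ℂ] H)ˣ) : Prop :=
  MemSchatten e (2 * p) (Pplus ε ∘L (g : H →L[ℂ] H) ∘L Pminus ε) ∧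
    MemSchatten e (2 * p) (Pminus ε ∘L (g : H →L[ℂ] H) ∘L Pplus ε)


open Filter Topology

theorem hs_parseval {κ : Type*} (f : HilbertBasis κ ℂ H) (x : H) :
    HasSum (fun j => ‖⟪f j, x⟫_ℂ‖ ^ 2) (‖x‖ ^ 2) := by
  have h := (f.hasSum_inner_mul_inner x x).mapL Complex.reCLM
  convert! h using 1
  · ext j
    rw [← inner_conj_symm x (f j), ← Complex.normSq_eq_conj_mul_self, Complex.normSq_eq_norm_sq]
    simp only [Complex.reCLM_apply, Complex.ofReal_re]
  · rw [Complex.reCLM_apply]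
    exact (inner_self_eq_norm_sq (𝕜 := ℂ) x).symm

theorem hs_basis_indep {ι κ : Type*} (e : HilbertBasis ι ℂ H) (f : HilbertBasis κ ℂ H)
    (R : H →L[ℂ] H) (hR : IsSelfAdjoint R) (h : Summable fun i => ‖R (e i)‖ ^ 2) :
    Summable fun j => ‖R (f j)‖ ^ 2 := by
  have h1 : Summable fun x : ι × κ => ‖⟪f x.2, R (e x.1)⟫_ℂ‖ ^ 2 := by
    refine (summable_prod_of_nonneg (fun _ => sq_nonneg _)).mpr
      ⟨fun i => (hs_parseval f (R (e i))).summable, ?_⟩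
    refine h.congr fun i => ?_
    exact (hs_parseval f (R (e i))).tsum_eq.symm
  have h2 := (Equiv.prodComm κ ι).summable_iff.mpr h1
  have h3 := ((summable_prod_of_nonneg (fun _ => sq_nonneg _)).mp h2).2
  refine h3.congr fun j => ?_
  rw [← (hs_parseval e (R (f j))).tsum_eq]
  refine tsum_congr fun i => ?_
  simp only [Function.comp, Equiv.prodComm_apply, Prod.swap]
  rw [← ContinuousLinearMap.adjoint_inner_left, ← ContinuousLinearMap.star_eq_adjoint, hR.star_eq,
    norm_inner_symm]

theorem hs_compact {ι : Type*} (e : HilbertBasis ι ℂ H)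
    (R : H →L[ℂ] H) (h : Summable fun i => ‖R (e i)‖ ^ 2) : IsCompactOperator R := by
  let F : ι → H →L[ℂ] H := fun i => (innerSL ℂ (e i)).smulRight (R (e i))
  have hF : ∀ i x, F i x = ⟪e i, x⟫_ℂ • R (e i) := fun i x => by simp [F]
  have hb : ∀ t : Finset ι, ‖∑ i ∈ t, F i‖ ≤ √(∑ i ∈ t, ‖R (e i)‖ ^ 2) := by
    intro t
    refine ContinuousLinearMap.opNorm_le_bound _ (by positivity) fun x => ?_
    rw [sum_apply]
    calc ‖∑ i ∈ t, F i x‖ ≤ ∑ i ∈ t, ‖R (e i)‖ * ‖⟪e i, x⟫_ℂ‖ := by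
          refine (norm_sum_le _ _).trans (Finset.sum_le_sum fun i _ => ?_)
          rw [hF, norm_smul, mul_comm]
      _ ≤ √(∑ i ∈ t, ‖R (e i)‖ ^ 2) * √(∑ i ∈ t, ‖⟪e i, x⟫_ℂ‖ ^ 2) :=
          Real.sum_mul_le_sqrt_mul_sqrt _ _ _
      _ ≤ √(∑ i ∈ t, ‖R (e i)‖ ^ 2) * ‖x‖ := by
          gcongr
          rw [Real.sqrt_le_left (norm_nonneg _)]
          exact sum_le_hasSum t (fun _ _ => by positivity) (hs_parseval e x)
  have hs : Summable F := by
    rw [summable_iff_vanishing_norm]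
    intro ε hε
    obtain ⟨s, hs⟩ := summable_iff_vanishing_norm.mp h (ε ^ 2) (by positivity)
    refine ⟨s, fun t ht => (hb t).trans_lt ?_⟩
    rw [Real.sqrt_lt' hε]
    exact (le_abs_self _).trans_lt (hs t ht)
  have hsum : HasSum F R := by
    convert! hs.hasSum
    ext x
    have h1 := hs.hasSum.mapL (ContinuousLinearMap.apply ℂ H x)
    have h2 := (e.hasSum_repr x).mapL R
    refine h2.unique ?_
    convert! h1 using 1
    ext i
    simp [hF, e.repr_apply_apply]
  refine isCompactOperator_of_tendsto hsum (Eventually.of_forall fun t => ?_)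
  have hFc : ∀ i, F i ∈ compactOperator (RingHom.id ℂ) H H := by
    intro i
    have : IsCompactOperator (innerSL ℂ (e i)) :=
      isCompactOperator_of_locallyCompactSpace_dom _
    exact this.clm_comp ((ContinuousLinearMap.id ℂ ℂ).smulRight (R (e i)))
  exact (compactOperator (RingHom.id ℂ) H H).sum_mem fun i _ => hFc i

theorem cfc_eigen (S : H →L[ℂ] H) (hS : IsSelfAdjoint S) (f : H) (hf : f ≠ 0) (l : ℝ)
    (hl : S f = (l : ℂ) • f) (g : ℝ → ℝ) (hg : ContinuousOn g (spectrum ℝ S)) :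
    cfc g S f = (g l : ℂ) • f := by
  have hmem : l ∈ spectrum ℝ S := by
    rw [spectrum.mem_iff]
    intro hu
    obtain ⟨u, hu⟩ := hu
    have h0 : (u : H →L[ℂ] H) f = 0 := by
      rw [hu, sub_apply, hl, Algebra.algebraMap_eq_smul_one]
      simp
    apply hf
    have : ((u⁻¹ : (H →L[ℂ] H)ˣ) : H →L[ℂ] H) ((u : H →L[ℂ] H) f) = f := by
      rw [← mul_apply_eq_comp, Units.inv_mul]; rfl
    rw [← this, h0, map_zero]
  have key : ∀ φ : C(spectrum ℝ S, ℝ), cfcHom hS φ f = (φ ⟨l, hmem⟩ : ℂ) • f := by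
    intro φ
    induction φ using ContinuousMap.induction_on_of_compact with
    | const r =>
      have : ContinuousMap.const (spectrum ℝ S) r = algebraMap ℝ _ r := rfl
      rw [this, AlgHomClass.commutes, Algebra.algebraMap_eq_smul_one]
      simp
    | id => rw [cfcHom_id hS, hl]; rfl
    | star_id => rw [map_star, cfcHom_id, hS.star_eq, hl]; simp
    | add f g hf hg => rw [map_add, add_apply, hf, hg]; simp [add_smul]
    | mul f g hf hg =>
      rw [map_mul, mul_apply_eq_comp, hg, map_smul, hf, smul_smul, mul_comm]
      simp only [ContinuousMap.mul_apply, Complex.ofReal_mul]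
    | frequently φ hφ =>
      have hc : IsClosed {φ : C(spectrum ℝ S, ℝ) | cfcHom hS φ f = (φ ⟨l, hmem⟩ : ℂ) • f} := by
        have := cfcHom_continuous (R := ℝ) hS
        refine isClosed_eq (by fun_prop) ?_
        exact (Complex.continuous_ofReal.comp (continuous_eval_const (⟨l, hmem⟩ : spectrum ℝ S))).smul continuous_const
      have h3 := mem_closure_iff_frequently.mpr hφ
      exact hc.closure_subset h3
  rw [cfc_apply g S hS hg, key]
  rfl

theorem exists_eigenbasis.{u} {H : Type u} [NormedAddCommGroup H] [InnerProductSpace ℂ H]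
    [CompleteSpace H] (S : H →L[ℂ] H) (hS : IsSelfAdjoint S) (hc : IsCompactOperator S) :
    ∃ (κ : Type u) (f : HilbertBasis κ ℂ H), ∀ j, ∃ c : ℂ, S (f j) = c • f j := by
  have hsym : S.IsSymmetric := hS.isSymmetric
  have hbot := ContinuousLinearMap.orthogonalComplement_iSup_eigenspaces_eq_bot hc hsym
  have hfam := hsym.orthogonalFamily_eigenspaces
  have : ∀ μ, CompleteSpace (Module.End.eigenspace (S : Module.End ℂ H) μ) := by
    intro μ
    have : IsClosed ((Module.End.eigenspace (S : Module.End ℂ H) μ : Submodule ℂ H) : Set H) := by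
      have h2 : ((Module.End.eigenspace (S : Module.End ℂ H) μ : Submodule ℂ H) : Set H)
        = {x | S x = μ • x} := by ext x; simp [Module.End.mem_eigenspace_iff]
      rw [h2]
      exact isClosed_eq (by fun_prop) (by fun_prop)
    exact this.completeSpace_coe
  choose w b hb using fun μ => exists_hilbertBasis ℂ (Module.End.eigenspace (S : Module.End ℂ H) μ)
  have hon := hfam.orthonormal_sigma_orthonormal (fun μ => (b μ).orthonormal)
  refine ⟨_, HilbertBasis.mkOfOrthogonalEqBot hon ?_, ?_⟩
  · set V := Submodule.span ℂ (Set.range fun a : (Σ μ, w μ) =>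
      (Module.End.eigenspace (S : Module.End ℂ H) a.1).subtypeₗᵢ (b a.1 a.2)) with hV
    have hle : (⨆ μ, Module.End.eigenspace (S : Module.End ℂ H) μ) ≤ V.topologicalClosure := by
      refine iSup_le fun μ x hx => ?_
      have h1 := ((b μ).hasSum_repr ⟨x, hx⟩).mapL
        (Module.End.eigenspace (S : Module.End ℂ H) μ).subtypeL
      refine mem_closure_of_tendsto h1 (Eventually.of_forall fun t => ?_)
      refine V.sum_mem fun i _ => ?_
      rw [map_smul]
      exact V.smul_mem _ (Submodule.subset_span ⟨⟨μ, i⟩, rfl⟩)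
    rw [eq_bot_iff, ← hbot, ← Submodule.orthogonal_closure V]
    exact Submodule.orthogonal_le hle
  · rintro ⟨μ, j⟩
    refine ⟨μ, ?_⟩
    rw [HilbertBasis.coe_mkOfOrthogonalEqBot]
    exact Module.End.mem_eigenspace_iff.mp (b μ j).2

/-- `A*A` -/
theorem gram_nonneg (A : H →L[ℂ] H) : 0 ≤ ContinuousLinearMap.adjoint A ∘L A :=
  star_mul_self_nonneg A

theorem gram_sa (A : H →L[ℂ] H) : IsSelfAdjoint (ContinuousLinearMap.adjoint A ∘L A) :=
  (gram_nonneg A).isSelfAdjoint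

theorem gram_spec (A : H →L[ℂ] H) :
    ∀ x ∈ spectrum ℝ (ContinuousLinearMap.adjoint A ∘L A), 0 ≤ x :=
  fun _ hx => spectrum_nonneg_of_nonneg (gram_nonneg A) hx

theorem gram_inner (A : H →L[ℂ] H) (x : H) :
    ⟪(ContinuousLinearMap.adjoint A ∘L A) x, x⟫_ℂ = ((‖A x‖ ^ 2 : ℝ) : ℂ) := by
  rw [ContinuousLinearMap.comp_apply, ContinuousLinearMap.adjoint_inner_left,
    inner_self_eq_norm_sq_to_K]
  norm_cast

/-- square root of absPow -/
noncomputable def sqAbs (p : ℝ) (A : H →L[ℂ] H) : H →L[ℂ] H :=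
  cfc (fun x : ℝ => x ^ (p / 2)) (ContinuousLinearMap.adjoint A ∘L A)

theorem sqAbs_sa (p : ℝ) (A : H →L[ℂ] H) : IsSelfAdjoint (sqAbs p A) := cfc_predicate _ _

theorem absPow_eq (p : ℝ) (hp : 1 ≤ p) (A : H →L[ℂ] H) :
    absPow (2 * p) A = sqAbs p A * sqAbs p A := by
  have hc : Continuous fun x : ℝ => x ^ (p / 2) :=
    Real.continuous_rpow_const (by positivity)
  unfold absPow sqAbs
  rw [← cfc_mul _ _ _ hc.continuousOn hc.continuousOn]
  refine cfc_congr fun x hx => ?_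
  have := gram_spec A x hx
  rw [← Real.rpow_add_of_nonneg this (by positivity) (by positivity)]
  congr 1; ring

theorem absPow_inner (p : ℝ) (hp : 1 ≤ p) (A : H →L[ℂ] H) (x : H) :
    Complex.re ⟪absPow (2 * p) A x, x⟫_ℂ = ‖sqAbs p A x‖ ^ 2 := by
  rw [absPow_eq p hp, mul_apply_eq_comp]
  have h : ⟪sqAbs p A (sqAbs p A x), x⟫_ℂ = ⟪sqAbs p A x, sqAbs p A x⟫_ℂ :=
    (sqAbs_sa p A).isSymmetric _ _
  rw [h]
  exact inner_self_eq_norm_sq (𝕜 := ℂ) _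

theorem memSchatten_iff {ι : Type*} (e : HilbertBasis ι ℂ H) (p : ℝ) (hp : 1 ≤ p)
    (A : H →L[ℂ] H) :
    MemSchatten e (2 * p) A ↔ Summable fun i => ‖sqAbs p A (e i)‖ ^ 2 := by
  unfold MemSchatten
  simp only [absPow_inner p hp]

theorem memSchatten_indep {ι κ : Type*} (e : HilbertBasis ι ℂ H) (f : HilbertBasis κ ℂ H)
    (p : ℝ) (hp : 1 ≤ p) (A : H →L[ℂ] H) (h : MemSchatten e (2 * p) A) :
    MemSchatten f (2 * p) A := by
  rw [memSchatten_iff _ p hp] at h ⊢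
  exact hs_basis_indep e f _ (sqAbs_sa p A) h

theorem rpow_tangent (p : ℝ) (hp : 1 ≤ p) (t x : ℝ) (ht : 0 < t) (hx : 0 ≤ x) :
    t ^ p + p * t ^ (p - 1) * (x - t) ≤ x ^ p := by
  have h := one_add_mul_self_le_rpow_one_add (s := x / t - 1)
    (by have : 0 ≤ x / t := by positivity
        linarith) hp
  rw [add_sub_cancel, Real.div_rpow hx ht.le, le_div_iff₀ (by positivity)] at h
  refine le_trans (le_of_eq ?_) h
  rw [Real.rpow_sub_one ht.ne']
  field_simp

theorem peierls (p : ℝ) (hp : 1 ≤ p) (A : H →L[ℂ] H) (f : H) (hf : ‖f‖ = 1) :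
    ‖A f‖ ^ (2 * p) ≤ Complex.re ⟪absPow (2 * p) A f, f⟫_ℂ := by
  set t : ℝ := ‖A f‖ ^ 2 with ht
  have hpow : ‖A f‖ ^ (2 * p) = t ^ p := by
    rw [Real.rpow_mul (norm_nonneg _)]; norm_num [ht]
  rcases (sq_nonneg ‖A f‖).eq_or_lt with h0 | h0
  · rw [hpow, ht, ← h0, Real.zero_rpow (by positivity), absPow_inner p hp]
    positivity
  set S := ContinuousLinearMap.adjoint A ∘L A with hS
  have hSsa : IsSelfAdjoint S := gram_sa A
  have hle : cfc (fun x : ℝ => (t ^ p - p * t ^ (p - 1) * t) + p * t ^ (p - 1) * x) S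
      ≤ absPow (2 * p) A := by
    refine cfc_mono (fun x hx => ?_) (by fun_prop)
      (Real.continuous_rpow_const (by positivity)).continuousOn
    have := rpow_tangent p hp t x h0 (gram_spec A x hx)
    have e1 : 2 * p / 2 = p := by ring
    rw [e1]
    linarith
  rw [cfc_const_add _ _ _ (by fun_prop) hSsa, cfc_const_mul_id _ _ hSsa] at hle
  have hpos := (ContinuousLinearMap.le_def _ _).mp hle
  have h1 := hpos.re_inner_nonneg_left f
  rw [sub_apply, inner_sub_left, add_apply, inner_add_left, Algebra.algebraMap_eq_smul_one] at h1
  have h2 : ⟪S f, f⟫_ℂ = (t : ℂ) := gram_inner A f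
  have h3 : ⟪f, f⟫_ℂ = 1 := by rw [inner_self_eq_norm_sq_to_K, hf]; norm_num
  simp only [smul_apply, one_apply_eq_self, inner_smul_left_eq_smul, h2, h3] at h1
  simp at h1
  rw [hpow]
  linarith

theorem compact_of_memSchatten {ι : Type*} (e : HilbertBasis ι ℂ H) (p : ℝ) (hp : 1 ≤ p)
    (A : H →L[ℂ] H) (h : MemSchatten e (2 * p) A) : IsCompactOperator A := by
  rw [memSchatten_iff _ p hp] at h
  have hR := hs_compact e _ h
  set S := ContinuousLinearMap.adjoint A ∘L A with hS
  have hSsa : IsSelfAdjoint S := gram_sa A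
  let k : ℝ → ℝ → ℝ := fun d x => max (x - d) 0 / (max x d) ^ (1 + p / 2)
  have hkc : ∀ d, 0 < d → Continuous (k d) := by
    intro d hd
    refine Continuous.div (by fun_prop) ?_ ?_
    · exact (Real.continuous_rpow_const (by positivity)).comp (by fun_prop)
    · intro x
      have : 0 < max x d := lt_max_of_lt_right hd
      positivity
  have hrc : Continuous fun x : ℝ => x ^ (p / 2) := Real.continuous_rpow_const (by positivity)
  have hb : ∀ d, 0 < d → ‖A - A * (cfc (k d) S * sqAbs p A)‖ ^ 2 ≤ d := by
    intro d hd
    have e1 : cfc (k d) S * sqAbs p A = cfc (fun x => k d x * x ^ (p / 2)) S :=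
      (cfc_mul _ _ _ (hkc d hd).continuousOn hrc.continuousOn).symm
    have hc1 : Continuous fun x => k d x * x ^ (p / 2) := (hkc d hd).mul hrc
    have hc2 : Continuous fun x => 1 - k d x * x ^ (p / 2) := continuous_const.sub hc1
    have e2 : A - A * (cfc (k d) S * sqAbs p A) = A * cfc (fun x => 1 - k d x * x ^ (p / 2)) S := by
      rw [e1, cfc_sub _ _ _ continuousOn_const hc1.continuousOn, cfc_const_one ℝ S, mul_sub, mul_one]
    set Q := cfc (fun x => 1 - k d x * x ^ (p / 2)) S with hQ
    have hQsa : IsSelfAdjoint Q := cfc_predicate _ _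
    have e3 : star (A * Q) * (A * Q)
        = cfc (fun x => (1 - k d x * x ^ (p / 2)) * x * (1 - k d x * x ^ (p / 2))) S := by
      rw [cfc_mul (fun x => (1 - k d x * x ^ (p / 2)) * x) (fun x => 1 - k d x * x ^ (p / 2)) S
          (hc2.mul continuous_id).continuousOn hc2.continuousOn,
        cfc_mul (fun x => 1 - k d x * x ^ (p / 2)) (fun x => x) S hc2.continuousOn
          continuousOn_id, cfc_id' ℝ S, ← hQ, star_mul, hQsa.star_eq]
      have : S = star A * A := rfl
      rw [this]
      noncomm_ring
    rw [e2, sq, ← CStarRing.norm_star_mul_self, e3]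
    refine norm_cfc_le hd.le fun x hx => ?_
    have hx0 := gram_spec A x hx
    rw [Real.norm_eq_abs, abs_of_nonneg (by
      have := mul_nonneg hx0 (mul_self_nonneg (1 - k d x * x ^ (p / 2)))
      linarith)]
    rcases le_total x d with hxd | hxd
    · have : k d x = 0 := by simp [k, max_eq_right (sub_nonpos.mpr hxd)]
      rw [this]; simpa using hxd
    · have hxp : 0 < x := hd.trans_le hxd
      have : k d x * x ^ (p / 2) = (x - d) / x := by
        simp only [k]
        rw [max_eq_left (sub_nonneg.mpr hxd), max_eq_left hxd, Real.rpow_add hxp, Real.rpow_one]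
        have : 0 < x ^ (p / 2) := by positivity
        field_simp
      rw [this]
      have : (1 - (x - d) / x) * x * (1 - (x - d) / x) = d * (d / x) := by field_simp; ring
      rw [this]
      have : d / x ≤ 1 := (div_le_one hxp).mpr hxd
      nlinarith
  have hlim : Tendsto (fun d => A * (cfc (k d) S * sqAbs p A)) (𝓝[>] 0) (𝓝 A) := by
    rw [tendsto_iff_norm_sub_tendsto_zero]
    have hsq : Tendsto (fun d : ℝ => √d) (𝓝[>] 0) (𝓝 0) := by
      have := Real.continuous_sqrt.tendsto 0
      rw [Real.sqrt_zero] at this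
      exact this.mono_left nhdsWithin_le_nhds
    refine squeeze_zero' (Eventually.of_forall fun _ => norm_nonneg _) ?_ hsq
    filter_upwards [self_mem_nhdsWithin] with d hd
    rw [norm_sub_rev]
    exact Real.le_sqrt_of_sq_le (hb d hd)
  refine isCompactOperator_of_tendsto hlim (Eventually.of_forall fun d => ?_)
  exact (hR.clm_comp (cfc (k d) S)).clm_comp A

theorem memSchatten_of_compact.{u, v} {H : Type u} [NormedAddCommGroup H] [InnerProductSpace ℂ H]
    [CompleteSpace H] {ι : Type v} (e : HilbertBasis ι ℂ H) (p : ℝ) (hp : 1 ≤ p)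
    (A : H →L[ℂ] H) (hc : IsCompactOperator A)
    (h : ∀ (κ : Type u) (f : HilbertBasis κ ℂ H), Summable fun j => ‖A (f j)‖ ^ (2 * p)) :
    MemSchatten e (2 * p) A := by
  obtain ⟨κ, f, hf⟩ := exists_eigenbasis _ (gram_sa A)
    (hc.clm_comp (ContinuousLinearMap.adjoint A))
  refine memSchatten_indep f e p hp A ?_
  refine (h κ f).congr fun j => ?_
  obtain ⟨c, hcj⟩ := hf j
  have hn : ‖f j‖ = 1 := f.orthonormal.1 j
  have h3 : ⟪f j, f j⟫_ℂ = 1 := by rw [inner_self_eq_norm_sq_to_K, hn]; norm_num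
  have hin := gram_inner A (f j)
  rw [hcj, inner_smul_left, h3, mul_one] at hin
  have hc' : c = ((‖A (f j)‖ ^ 2 : ℝ) : ℂ) := by
    rw [← Complex.conj_conj c, hin, Complex.conj_ofReal]
  rw [hc'] at hcj
  have h0 : f j ≠ 0 := by intro h; simp [h] at hn
  have := cfc_eigen _ (gram_sa A) (f j) h0 _ hcj (fun x => x ^ (2 * p / 2))
    (Real.continuous_rpow_const (by positivity)).continuousOn
  unfold absPow
  rw [this, inner_smul_left, h3, mul_one, Complex.conj_ofReal, Complex.ofReal_re]
  rw [← Real.rpow_natCast, ← Real.rpow_mul (norm_nonneg _)]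
  congr 1
  push_cast; ring

/-- Basis-uniform description of the Schatten class. -/
def SchP.{u} {H : Type u} [NormedAddCommGroup H] [InnerProductSpace ℂ H]
    [CompleteSpace H] (p : ℝ) (A : H →L[ℂ] H) : Prop :=
  IsCompactOperator A ∧
    ∀ (κ : Type u) (f : HilbertBasis κ ℂ H), Summable fun j => ‖A (f j)‖ ^ (2 * p)

theorem memSchatten_iff_schP {ι : Type*} (e : HilbertBasis ι ℂ H) (p : ℝ) (hp : 1 ≤ p)
    (A : H →L[ℂ] H) : MemSchatten e (2 * p) A ↔ SchP p A := by
  constructor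
  · intro h
    refine ⟨compact_of_memSchatten e p hp A h, fun κ f => ?_⟩
    refine Summable.of_nonneg_of_le (fun j => by positivity)
      (fun j => peierls p hp A (f j) (f.orthonormal.1 j)) (memSchatten_indep e f p hp A h)
  · rintro ⟨h1, h2⟩
    exact memSchatten_of_compact e p hp A h1 h2

theorem SchP.left {p : ℝ} (hp : 1 ≤ p) {A : H →L[ℂ] H} (h : SchP p A) (B : H →L[ℂ] H) :
    SchP p (B * A) := by
  refine ⟨h.1.clm_comp B, fun κ f => ?_⟩
  refine Summable.of_nonneg_of_le (fun j => by positivity) (fun j => ?_)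
    ((h.2 κ f).mul_left (‖B‖ ^ (2 * p)))
  rw [← Real.mul_rpow (norm_nonneg _) (norm_nonneg _)]
  exact Real.rpow_le_rpow (norm_nonneg _) (B.le_opNorm _) (by positivity)

theorem SchP.add {p : ℝ} (hp : 1 ≤ p) {A B : H →L[ℂ] H} (hA : SchP p A) (hB : SchP p B) :
    SchP p (A + B) := by
  refine ⟨hA.1.add hB.1, fun κ f => ?_⟩
  refine Summable.of_nonneg_of_le (fun j => by positivity) (fun j => ?_)
    (((hA.2 κ f).add (hB.2 κ f)).mul_left (2 ^ (2 * p - 1)))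
  refine le_trans (Real.rpow_le_rpow (norm_nonneg _) (norm_add_le _ _) (by positivity)) ?_
  exact_mod_cast NNReal.rpow_add_le_mul_rpow_add_rpow ‖A (f j)‖₊ ‖B (f j)‖₊
    (by linarith : 1 ≤ 2 * p)

theorem SchP.zero {p : ℝ} (hp : 1 ≤ p) : SchP p (0 : H →L[ℂ] H) := by
  refine ⟨isCompactOperator_zero, fun κ f => ?_⟩
  have : 2 * p ≠ 0 := by positivity
  simp [Real.zero_rpow this, summable_zero]

theorem SchP.right {p : ℝ} (hp : 1 ≤ p) {A : H →L[ℂ] H} (h : SchP p A) (B : H →L[ℂ] H) :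
    SchP p (A * B) := by
  have hB : B ∈ Submodule.span ℂ (unitary (H →L[ℂ] H) : Set (H →L[ℂ] H)) := by
    rw [CStarAlgebra.span_unitary]; trivial
  induction hB using Submodule.span_induction with
  | mem U hU =>
    refine ⟨h.1.comp_clm U, fun κ f => ?_⟩
    let L := Unitary.linearIsometryEquiv ⟨U, hU⟩
    exact h.2 κ (HilbertBasis.ofRepr (L.symm.trans f.repr))
  | zero => rw [mul_zero]; exact SchP.zero hp
  | add x y _ _ hx hy => rw [mul_add]; exact hx.add hp hy
  | smul c x _ hx =>
    have : A * (c • x) = (c • (1 : H →L[ℂ] H)) * (A * x) := by simp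
    rw [this]
    exact hx.left hp _

/-- `GL_p(H)` is a group: it is closed under products and inverses. -/
theorem memGLp_mul_inv {ι : Type*} (e : HilbertBasis ι ℂ H)
    (ε : H →L[ℂ] H) (hsa : IsSelfAdjoint ε) (hsq : ε ∘L ε = 1) (p : ℝ) (hp : 1 ≤ p)
    (g h : (H →L[ℂ] H)ˣ) (hg : MemGLp e ε p g) (hh : MemGLp e ε p h) :
    MemGLp e ε p (g * h) ∧ MemGLp e ε p g⁻¹ := by
  unfold MemGLp at *
  simp only [memSchatten_iff_schP e p hp, ← ContinuousLinearMap.mul_def] at *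
  set P := Pplus ε with hP
  set M := Pminus ε with hM
  have hsum : P + M = 1 := by
    simp only [hP, hM, Pplus, Pminus, ← smul_add]
    rw [show (1 + ε + (1 - ε)) = (2 : ℂ) • (1 : H →L[ℂ] H) by rw [two_smul]; abel, smul_smul]
    norm_num
  have hPM : P * M = 0 := by
    simp only [hP, hM, Pplus, Pminus, smul_mul_smul_comm]
    rw [show (1 + ε) * (1 - ε) = 1 - ε * ε by noncomm_ring, hsq, sub_self, smul_zero]
  have hMP : M * P = 0 := by
    simp only [hP, hM, Pplus, Pminus, smul_mul_smul_comm]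
    rw [show (1 - ε) * (1 + ε) = 1 - ε * ε by noncomm_ring, hsq, sub_self, smul_zero]
  clear_value P M
  obtain rfl : M = 1 - P := eq_sub_of_add_eq' hsum
  have hPP : P * P = P := by
    rw [mul_sub, mul_one, sub_eq_zero] at hPM; exact hPM.symm
  obtain ⟨hg1, hg2⟩ := hg
  obtain ⟨hh1, hh2⟩ := hh
  have hprod : ∀ x y : H →L[ℂ] H, ∀ P M : H →L[ℂ] H, P + M = 1 → P * P = P → M * M = M →
      SchP p (P * (x * M)) → SchP p (P * (y * M)) → SchP p (P * (x * y * M)) := by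
    intro x y P M h1 h2 h3 hx hy
    have : P * (x * y * M) = P * x * (P * (y * M)) + P * (x * M) * (y * M) := by
      calc P * (x * y * M) = P * (x * (P + M) * y * M) := by rw [h1]; noncomm_ring
        _ = P * x * (P * (y * M)) + P * (x * M) * (y * M) := by noncomm_ring
    rw [this]
    exact (hy.left hp _).add hp (hx.right hp _)
  have hMM : (1 - P) * (1 - P) = 1 - P := by
    rw [mul_sub, mul_one, hMP, sub_zero]
  have hgi : (g : H →L[ℂ] H) * ((g⁻¹ : (H →L[ℂ] H)ˣ) : H →L[ℂ] H) = 1 := g.mul_inv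
  have hig : ((g⁻¹ : (H →L[ℂ] H)ˣ) : H →L[ℂ] H) * (g : H →L[ℂ] H) = 1 := g.inv_mul
  have hneg : ∀ A : H →L[ℂ] H, SchP p A → SchP p (-A) := by
    intro A hA
    have := hA.left hp (-1)
    rwa [neg_one_mul] at this
  have hinv : ∀ x y : H →L[ℂ] H, x * y = 1 → y * x = 1 → ∀ P M : H →L[ℂ] H, P + M = 1 →
      P * M = 0 → M * M = M →
      SchP p (P * (x * M)) → SchP p (M * (x * P)) → SchP p (P * (y * M)) := by
    intro x y hxy hyx P M h1 h2 h3 hb hc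
    obtain rfl : P = 1 - M := eq_sub_of_add_eq h1
    have : (1 - M) * (y * M) = (1 - M) * y * (M * (x * (1 - M)) + -((1 - M) * (x * M))) * (y * M) := by
      have e1 : M * (x * (1 - M)) + -((1 - M) * (x * M)) = M * x - x * M := by noncomm_ring
      rw [e1]
      have e2 : (1 - M) * y * (M * x - x * M) * (y * M)
          = (1 - M) * y * M * (x * y) * M - (1 - M) * (y * x) * M * y * M := by noncomm_ring
      rw [e2, hxy, hyx, mul_one, mul_one, h2, zero_mul, zero_mul, sub_zero, mul_assoc _ M M, h3,
        mul_assoc]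
    rw [this]
    exact ((hc.add hp (hneg _ hb)).left hp _).right hp _
  refine ⟨⟨?_, ?_⟩, ?_, ?_⟩
  · exact hprod _ _ _ _ hsum hPP hMM hg1 hh1
  · exact hprod _ _ _ _ (by rw [add_comm, hsum]) hMM hPP hg2 hh2
  · exact hinv _ _ hgi hig _ _ hsum hPM hMM hg1 hg2
  · exact hinv _ _ hgi hig _ _ (by rw [add_comm, hsum]) hMP hPP hg2 hg1
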